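/- Let R = 𝔽₂[x₁, …, x_s] with Steenrod operations determined by Sq(x_i) = x_i + x_i². For 1 ≤ j ≤ s, the class S_j Sq¹(x₁⋯x_s) := Sq^{2^j−1} ⋯ Sq^7 Sq^3 Sq^1 (x₁ ⋯ x_s) is nonzero; in fact the monomial x₁^{2^j} x₂^{2^{j−1}} ⋯ x_j² x_{j+1} ⋯ x_s occurs with coefficient 1 in it. -/

import Mathlib

open MvPolynomial

/-- The total Steenrod operation on `𝔽₂[x₁,…,x_s]`, the ring endomorphism
with `Sq(x_i) = x_i + x_i²`. -/
noncomputable def totalSq (s : ℕ) :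
    MvPolynomial (Fin s) (ZMod 2) →ₐ[ZMod 2] MvPolynomial (Fin s) (ZMod 2) :=
  aeval (fun i => X i + X i ^ 2)

/-- Apply `Sq^n` to a pair (homogeneous class, its degree): for `f` of degree `d`,
`Sq^n f` is the degree `d + n` component of `Sq f`. -/
noncomputable def applySq (s n : ℕ) (p : MvPolynomial (Fin s) (ZMod 2) × ℕ) :
    MvPolynomial (Fin s) (ZMod 2) × ℕ :=
  (homogeneousComponent (p.2 + n) (totalSq s p.1), p.2 + n)

/-- `S_j Sq¹ (x₁⋯x_s) = Sq^{2^j−1} ⋯ Sq^7 Sq^3 Sq^1 (x₁⋯x_s)`, obtained by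
applying `Sq^{2^i−1}` successively for `i = 1, …, j` to the product of the
variables (which has degree `s`). -/
noncomputable def SjSq1 (s j : ℕ) : MvPolynomial (Fin s) (ZMod 2) × ℕ :=
  (List.range j).foldl (fun p i => applySq s (2 ^ (i + 1) - 1) p)
    (∏ i : Fin s, X i, s)

/-!
A monomial `x^m` occurs in `Sq (x^n)` only if `m ≤ 2n`, that is `n ≥ ⌈m/2⌉` exponentwise. Hence if
`f` is homogeneous of the same degree as `x^⌈m/2⌉`, the only term of `f` that contributes to the
coefficient of `x^m` in `Sq f` is the one in `x^⌈m/2⌉`, with the factor `∏ᵢ C(⌈mᵢ/2⌉, ⌊mᵢ/2⌋)`.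
Halving the exponents `(2^(j+1), 2^j, …, 2, 1, …, 1)` and rounding up gives
`(2^j, …, 2, 1, 1, …, 1)`, and this factor is `1` because each `mᵢ` is even or `1`. So the
coefficient `1` of `x₁⋯x_s` in itself is carried along from each operation to the next.
-/

theorem coeff_prod_aeval_X {σ R : Type*} [Fintype σ] [CommSemiring R] (p : σ → Polynomial R)
    (m : σ →₀ ℕ) :
    coeff m (∏ i, Polynomial.aeval (X i : MvPolynomial σ R) (p i)) = ∏ i, (p i).coeff (m i) := by
  classical
  have coeff_term (e : σ → ℕ) :
      coeff m (∏ i, algebraMap R (MvPolynomial σ R) ((p i).coeff (e i)) * X i ^ e i) =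
        if e = m then ∏ i, (p i).coeff (e i) else 0 := by
    have indicator_eq_iff : m = Finsupp.indicator Finset.univ (fun i _ ↦ e i) ↔ e = m := by
      simp [Finsupp.ext_iff, funext_iff, eq_comm]
    simp only [algebraMap_eq, Finset.prod_mul_distrib, ← map_prod, coeff_C_mul, coeff_prod_X_pow,
      indicator_eq_iff, mul_ite, mul_one, mul_zero]
  simp only [Polynomial.aeval_def, Polynomial.eval₂_eq_sum, Polynomial.sum_def,
    Finset.prod_univ_sum, coeff_sum, coeff_term]
  rw [Finset.sum_ite_eq', ite_eq_left_iff]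
  intro not_mem
  obtain ⟨i, hi⟩ : ∃ i, (p i).coeff (m i) = 0 := by simpa [Fintype.mem_piFinset] using not_mem
  exact (Finset.prod_eq_zero (Finset.mem_univ i) hi).symm

theorem coeff_X_add_X_sq_pow {R : Type*} [Semiring R] (n m : ℕ) :
    ((Polynomial.X + Polynomial.X ^ 2 : Polynomial R) ^ n).coeff m =
      if n ≤ m then (n.choose (m - n) : R) else 0 := by
  have factor : (Polynomial.X + Polynomial.X ^ 2 : Polynomial R) =
      Polynomial.X * (1 + Polynomial.X) := by
    rw [mul_add, mul_one, sq]
  rw [factor, (Polynomial.commute_X _).mul_pow, Polynomial.coeff_X_pow_mul',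
    Polynomial.coeff_one_add_X_pow]

section TotalSquare

variable {s : ℕ}

theorem coeff_totalSq_monomial (n m : Fin s →₀ ℕ) (c : ZMod 2) :
    coeff m (totalSq s (monomial n c)) =
      c * ∏ i, if n i ≤ m i then ((n i).choose (m i - n i) : ZMod 2) else 0 := by
  have totalSq_eq : totalSq s (monomial n c) = C c * ∏ i,
      Polynomial.aeval (X i) ((Polynomial.X + Polynomial.X ^ 2 : Polynomial (ZMod 2)) ^ n i) := by
    rw [totalSq, aeval_monomial, Finsupp.prod_fintype _ _ fun _ ↦ pow_zero _]
    simp [algebraMap_eq]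
  simp only [totalSq_eq, coeff_C_mul, coeff_prod_aeval_X, coeff_X_add_X_sq_pow]

theorem le_two_mul_of_coeff_totalSq_monomial_ne_zero {n m : Fin s →₀ ℕ} {c : ZMod 2}
    (h : coeff m (totalSq s (monomial n c)) ≠ 0) (i : Fin s) : m i ≤ 2 * n i := by
  contrapose! h
  rw [coeff_totalSq_monomial, Finset.prod_eq_zero (Finset.mem_univ i), mul_zero]
  rw [if_pos (by omega), Nat.choose_eq_zero_of_lt (by omega), Nat.cast_zero]

theorem coeff_totalSq_monomial_of_eq_ceil_half {n m : Fin s →₀ ℕ} (hn : ∀ i, n i = (m i + 1) / 2)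
    (c : ZMod 2) :
    coeff m (totalSq s (monomial n c)) = c * ∏ i, ((n i).choose (m i / 2) : ZMod 2) := by
  rw [coeff_totalSq_monomial]
  congr! 2 with i
  have := hn i
  rw [if_pos (by omega), show m i - n i = m i / 2 by omega]

theorem coeff_totalSq_of_isHomogeneous_ceil_half
    {f : MvPolynomial (Fin s) (ZMod 2)} {n m : Fin s →₀ ℕ}
    (hf : f.IsHomogeneous n.degree) (hn : ∀ i, n i = (m i + 1) / 2) :
    coeff m (totalSq s f) = coeff n f * ∏ i, ((n i).choose (m i / 2) : ZMod 2) := by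
  have eq_of_contributes {n' : Fin s →₀ ℕ} (hn' : n' ∈ f.support)
      (h : coeff m (totalSq s (monomial n' (coeff n' f))) ≠ 0) : n' = n := by
    have degree_eq : n'.degree = n.degree :=
      (DFunLike.congr_fun Finsupp.degree_eq_weight_one n').trans (hf (mem_support_iff.1 hn'))
    have n_le (i : Fin s) : n i ≤ n' i := by
      have := le_two_mul_of_coeff_totalSq_monomial_ne_zero h i
      have := hn i
      omega
    simp only [Finsupp.degree_eq_sum] at degree_eq
    ext i
    exact ((Finset.sum_eq_sum_iff_of_le fun i _ ↦ n_le i).1 degree_eq.symm i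
      (Finset.mem_univ i)).symm
  conv_lhs => rw [f.as_sum, map_sum, coeff_sum]
  rw [Finset.sum_eq_single n (fun n' hn' ↦ not_imp_comm.1 (eq_of_contributes hn'))
    (fun h ↦ by simp [notMem_support_iff.1 h]), coeff_totalSq_monomial_of_eq_ceil_half hn]

end TotalSquare

/-- The exponent `(2^j, 2^(j-1), …, 2, 1, …, 1)` of the monomial of `S_j Sq¹(x₁⋯x_s)` that is
followed through the iteration. With indices starting at `0`, the variable `x_(i+1)` has exponent
`2^(j-i)` for `i < j`. -/
noncomputable def leadingExponent (s j : ℕ) : Fin s →₀ ℕ :=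
  Finsupp.equivFunOnFinite.symm fun i ↦ if (i : ℕ) < j then 2 ^ (j - (i : ℕ)) else 1

theorem leadingExponent_apply (s j : ℕ) (i : Fin s) :
    leadingExponent s j i = if (i : ℕ) < j then 2 ^ (j - (i : ℕ)) else 1 :=
  rfl

theorem leadingExponent_succ_cases (s j : ℕ) (i : Fin s) :
    leadingExponent s (j + 1) i = 2 * leadingExponent s j i ∨
      leadingExponent s (j + 1) i = 1 ∧ leadingExponent s j i = 1 := by
  simp only [leadingExponent_apply]
  rcases lt_trichotomy (i : ℕ) j with h | h | h
  · left
    rw [if_pos h, if_pos (by omega), Nat.sub_add_comm h.le, pow_succ']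
  · left
    simp [h]
  · right
    rw [if_neg (by omega), if_neg (by omega)]
    exact ⟨rfl, rfl⟩

theorem degree_leadingExponent_add {s j : ℕ} (hjs : j ≤ s) :
    (leadingExponent s j).degree + j + 2 = 2 ^ (j + 1) + s := by
  induction j generalizing s with
  | zero => simp [Finsupp.degree_eq_sum, leadingExponent_apply, add_comm]
  | succ j ih =>
    obtain ⟨s, rfl⟩ := Nat.exists_eq_add_of_le' (Nat.le_of_add_left_le hjs)
    have degree_succ : (leadingExponent (s + 1) (j + 1)).degree =
        2 ^ (j + 1) + (leadingExponent s j).degree := by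
      simp [Finsupp.degree_eq_sum, Fin.sum_univ_succ, leadingExponent_apply]
    have := ih (Nat.le_of_succ_le_succ hjs)
    rw [degree_succ, pow_succ _ (j + 1)]
    omega

theorem SjSq1_succ (s j : ℕ) :
    SjSq1 s (j + 1) = applySq s (2 ^ (j + 1) - 1) (SjSq1 s j) := by
  simp [SjSq1, List.range_succ]

theorem isHomogeneous_SjSq1 (s j : ℕ) : (SjSq1 s j).1.IsHomogeneous (SjSq1 s j).2 := by
  cases j with
  | zero =>
    simpa [SjSq1] using
      IsHomogeneous.prod Finset.univ X _ fun (i : Fin s) _ ↦ isHomogeneous_X (ZMod 2) i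
  | succ j =>
    rw [SjSq1_succ]
    exact homogeneousComponent_isHomogeneous _ _

theorem snd_SjSq1_add (s j : ℕ) : (SjSq1 s j).2 + j + 2 = 2 ^ (j + 1) + s := by
  induction j with
  | zero => simp [SjSq1, add_comm]
  | succ j ih =>
    have := Nat.one_le_two_pow (n := j + 1)
    rw [SjSq1_succ, applySq, pow_succ _ (j + 1)]
    omega

theorem degree_leadingExponent_eq_snd_SjSq1 {s j : ℕ} (hjs : j ≤ s) :
    (leadingExponent s j).degree = (SjSq1 s j).2 := by
  have := degree_leadingExponent_add hjs
  have := snd_SjSq1_add s j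
  omega

theorem coeff_leadingExponent_SjSq1_succ {s j : ℕ} (hjs : j + 1 ≤ s) :
    coeff (leadingExponent s (j + 1)) (SjSq1 s (j + 1)).1 =
      coeff (leadingExponent s j) (SjSq1 s j).1 := by
  have isHomogeneous : (SjSq1 s j).1.IsHomogeneous (leadingExponent s j).degree :=
    degree_leadingExponent_eq_snd_SjSq1 (Nat.le_of_succ_le hjs) ▸ isHomogeneous_SjSq1 s j
  have ceil_half (i : Fin s) : leadingExponent s j i = (leadingExponent s (j + 1) i + 1) / 2 := by
    rcases leadingExponent_succ_cases s j i with h | h <;> omega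
  have choose_eq_one (i : Fin s) :
      (leadingExponent s j i).choose (leadingExponent s (j + 1) i / 2) = 1 := by
    rcases leadingExponent_succ_cases s j i with h | ⟨h, h'⟩
    · simp [h]
    · simp [h, h']
  have degree_eq := degree_leadingExponent_eq_snd_SjSq1 hjs
  rw [SjSq1_succ, applySq] at degree_eq ⊢
  rw [coeff_homogeneousComponent, if_pos degree_eq,
    coeff_totalSq_of_isHomogeneous_ceil_half isHomogeneous ceil_half]
  simp [choose_eq_one]

theorem coeff_leadingExponent_SjSq1 {s j : ℕ} (hjs : j ≤ s) :
    coeff (leadingExponent s j) (SjSq1 s j).1 = 1 := by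
  induction j with
  | zero =>
    have leadingExponent_eq :
        leadingExponent s 0 = Finsupp.indicator Finset.univ fun _ _ ↦ 1 := by
      ext i
      simp [leadingExponent_apply]
    simpa [SjSq1, leadingExponent_eq] using
      coeff_prod_X_pow (R := ZMod 2) (leadingExponent s 0) (fun _ ↦ 1) Finset.univ
  | succ j ih => rw [coeff_leadingExponent_SjSq1_succ hjs, ih (Nat.le_of_succ_le hjs)]

/-- Lemma 4.1 of Benoist–Ottem: for `1 ≤ j ≤ s`, the monomial
`x₁^{2^j} x₂^{2^{j−1}} ⋯ x_j² x_{j+1} ⋯ x_s` occurs with coefficient `1`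
in `S_j Sq¹(x₁⋯x_s)`; in particular this class is nonzero. -/
theorem stmt_3 (s j : ℕ) (hj : 1 ≤ j) (hjs : j ≤ s) :
    coeff (Finsupp.equivFunOnFinite.symm
        fun i : Fin s => if (i : ℕ) < j then 2 ^ (j - (i : ℕ)) else 1)
      (SjSq1 s j).1 = 1 ∧ (SjSq1 s j).1 ≠ 0 := by
  have coeff_eq_one := coeff_leadingExponent_SjSq1 hjs
  refine ⟨coeff_eq_one, fun eq_zero ↦ ?_⟩
  rw [eq_zero, coeff_zero] at coeff_eq_one
  exact zero_ne_one coeff_eq_one
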